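/- For every finite simple graph G, 3·Max(G) ≥ 2·α'(G), i.e., Max(G) ≥ (2/3)·α'(G). -/

import Mathlib

/-!
Max always plays an edge of a fixed maximum matching `M` of the remaining graph, which costs `M`
one edge. The reply of Min touches two vertices, each lying on at most one edge of `M`, so it costs
`M` at most two further edges. Hence every round adds two edges to the final matching while the
matching number of the remaining graph drops by at most three, and induction on the size of `M`
gives `2 * |M| ≤ 3 * Max` (`two_mul_card_le`). If only one edge of `M` is left, Max's move alone
suffices; otherwise Min does have a reply after Max's move.
-/


open Finset

variable {V : Type*} [DecidableEq V]

/-- The legal moves in the matching game on `G` when the set of remaining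
(undeleted) vertices is `s`: ordered pairs of adjacent remaining vertices. -/
def matchPlays (G : SimpleGraph V) [DecidableRel G.Adj] (s : Finset V) :
    Finset (V × V) :=
  (s ×ˢ s).filter fun p => G.Adj p.1 p.2

lemma matchPlays_card {G : SimpleGraph V} [DecidableRel G.Adj] {s : Finset V}
    {p : V × V} (hp : p ∈ matchPlays G s) :
    (s \ {p.1, p.2}).card < s.card := by
  simp only [matchPlays, mem_filter, mem_product] at hp
  refine card_lt_card (Finset.sdiff_ssubset ?_ ⟨p.1, mem_insert_self _ _⟩)
  intro x hx
  rcases mem_insert.mp hx with h | h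
  · exact h ▸ hp.1.1
  · exact (mem_singleton.mp h) ▸ hp.1.2

/-- The value of the matching game on the subgraph of `G` induced by the vertex
set `s`, with Max to move if `maxTurn = true` and Min to move otherwise:
the number of *further* edges added to the matching under optimal play. -/
def gameValue (G : SimpleGraph V) [DecidableRel G.Adj] (maxTurn : Bool)
    (s : Finset V) : ℕ :=
  if h : (matchPlays G s).Nonempty then
    if maxTurn then
      (matchPlays G s).attach.sup
        fun p => 1 + gameValue G false (s \ {p.1.1, p.1.2})
    else
      (matchPlays G s).attach.inf' (by simpa using h)
        fun p => 1 + gameValue G true (s \ {p.1.1, p.1.2})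
  else 0
termination_by s.card
decreasing_by
  · exact matchPlays_card p.2
  · exact matchPlays_card p.2

/-- The Max-start game matching number `Max(G)`. -/
noncomputable def gameMax [Fintype V] (G : SimpleGraph V) : ℕ :=
  letI : DecidableRel G.Adj := Classical.decRel _
  gameValue G true Finset.univ

/-- The Min-start game matching number `Min(G)`. -/
noncomputable def gameMin [Fintype V] (G : SimpleGraph V) : ℕ :=
  letI : DecidableRel G.Adj := Classical.decRel _
  gameValue G false Finset.univ

/-- `M` is a matching in `G`: a set of edges of `G` that are pairwise
vertex-disjoint. -/
def IsMatchingSet (G : SimpleGraph V) (M : Finset (Sym2 V)) : Prop :=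
  (∀ e ∈ M, e ∈ G.edgeSet) ∧
    ∀ e ∈ M, ∀ f ∈ M, e ≠ f → ∀ v : V, v ∈ e → v ∉ f

/-- The matching number `α'(G)`: the maximum size of a matching in `G`. -/
noncomputable def matchingNumber (G : SimpleGraph V) : ℕ :=
  sSup {n | ∃ M : Finset (Sym2 V), IsMatchingSet G M ∧ M.card = n}

lemma mem_matchPlays {G : SimpleGraph V} [DecidableRel G.Adj] {s : Finset V} {p : V × V} :
    p ∈ matchPlays G s ↔ (p.1 ∈ s ∧ p.2 ∈ s) ∧ G.Adj p.1 p.2 := by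
  simp [matchPlays]

lemma le_gameValue_true {G : SimpleGraph V} [DecidableRel G.Adj] {s : Finset V} {a b : V}
    (ha : a ∈ s) (hb : b ∈ s) (h : G.Adj a b) :
    1 + gameValue G false (s \ {a, b}) ≤ gameValue G true s := by
  have hp : (a, b) ∈ matchPlays G s := mem_matchPlays.2 ⟨⟨ha, hb⟩, h⟩
  rw [gameValue.eq_1 G true s, dif_pos ⟨_, hp⟩, if_pos rfl]
  exact Finset.le_sup (f := fun p : {x // x ∈ matchPlays G s} =>
    1 + gameValue G false (s \ {p.1.1, p.1.2})) (mem_attach _ ⟨(a, b), hp⟩)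

lemma exists_gameValue_false {G : SimpleGraph V} [DecidableRel G.Adj] {s : Finset V}
    (h : (matchPlays G s).Nonempty) :
    ∃ c d : V, gameValue G false s = 1 + gameValue G true (s \ {c, d}) := by
  rw [gameValue.eq_1 G false s, dif_pos h, if_neg (by simp)]
  obtain ⟨p, -, hp⟩ := Finset.exists_mem_eq_inf' (s := (matchPlays G s).attach)
    (by simpa using h)
    (fun p : {x // x ∈ matchPlays G s} => 1 + gameValue G true (s \ {p.1.1, p.1.2}))
  exact ⟨p.1.1, p.1.2, hp⟩

lemma IsMatchingSet.mono {G : SimpleGraph V} {M N : Finset (Sym2 V)} (h : IsMatchingSet G M)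
    (hN : N ⊆ M) : IsMatchingSet G N :=
  ⟨fun e he => h.1 e (hN he), fun e he f hf => h.2 e (hN he) f (hN hf)⟩

/-- Deleting a vertex destroys at most one edge of a matching. -/
lemma IsMatchingSet.card_le_filter {G : SimpleGraph V} {M : Finset (Sym2 V)}
    (h : IsMatchingSet G M) (v : V) : M.card ≤ (M.filter fun e => v ∉ e).card + 1 := by
  have h1 : (M.filter fun e => v ∈ e).card ≤ 1 := by
    refine Finset.card_le_one.2 fun e he f hf => ?_
    rw [mem_filter] at he hf
    by_contra hne
    exact h.2 e he.1 f hf.1 hne v he.2 hf.2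
  have h2 := Finset.card_filter_add_card_filter_not (s := M) (fun e => v ∈ e)
  omega

lemma two_mul_card_le (G : SimpleGraph V) [DecidableRel G.Adj] (n : ℕ) :
    ∀ (s : Finset V) (M : Finset (Sym2 V)), IsMatchingSet G M → (∀ e ∈ M, ∀ v ∈ e, v ∈ s) →
      M.card = n → 2 * n ≤ 3 * gameValue G true s := by
  induction n using Nat.strong_induction_on with
  | _ n ih =>
    intro s M hM hs hn
    rcases M.eq_empty_or_nonempty with rfl | ⟨e, he⟩
    · simp at hn
      omega
    induction e using Sym2.ind with
    | _ a b =>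
    have hmax := le_gameValue_true (hs _ he a (by simp)) (hs _ he b (by simp)) (hM.1 _ he)
    set M₁ := M.erase s(a, b) with hM₁
    have hcard : M₁.card + 1 = n := by rw [hM₁, card_erase_add_one he, hn]
    have hM1 : IsMatchingSet G M₁ := hM.mono (erase_subset _ _)
    have hs₁ : ∀ e ∈ M₁, ∀ v ∈ e, v ∈ s \ {a, b} := by
      intro e' he' v hv
      have hne := mem_erase.1 he'
      have hv' := hM.2 e' hne.2 _ he hne.1 v hv
      simp only [Sym2.mem_iff] at hv'
      simpa [hs e' hne.2 v hv] using hv'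
    rcases M₁.eq_empty_or_nonempty with h0 | ⟨f, hf⟩
    · rw [h0, card_empty] at hcard
      omega
    have hplay : (matchPlays G (s \ {a, b})).Nonempty := by
      induction f using Sym2.ind with
      | _ x y =>
      exact ⟨(x, y), mem_matchPlays.2
        ⟨⟨hs₁ _ hf x (by simp), hs₁ _ hf y (by simp)⟩, hM1.1 _ hf⟩⟩
    obtain ⟨c, d, hmin⟩ := exists_gameValue_false hplay
    have hc := hM1.card_le_filter c
    have hM2 := hM1.mono (filter_subset (fun e => c ∉ e) M₁)
    have hd := hM2.card_le_filter d
    have hM3 := hM2.mono (filter_subset (fun e => d ∉ e) _)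
    have hle := (card_filter_le (M₁.filter fun e => c ∉ e) fun e => d ∉ e).trans
      (card_filter_le M₁ fun e => c ∉ e)
    have key := ih _ (by omega) ((s \ {a, b}) \ {c, d}) _ hM3 (by
      intro e' he' v hv
      simp only [mem_filter] at he'
      rw [mem_sdiff]
      refine ⟨hs₁ e' he'.1.1 v hv, ?_⟩
      simp only [mem_insert, mem_singleton, not_or]
      exact ⟨fun h => he'.1.2 (h ▸ hv), fun h => he'.2 (h ▸ hv)⟩) rfl
    omega

/-- `Max(G) ≥ (2/3)·α'(G)` for every finite simple graph `G`. -/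
theorem stmt6 {V : Type*} [Fintype V] [DecidableEq V] (G : SimpleGraph V) :
    2 * matchingNumber G ≤ 3 * gameMax G := by
  classical
  -- The supremum is attained: matchings are subsets of the finite type `Sym2 V`.
  have hmem : matchingNumber G ∈ {n | ∃ M : Finset (Sym2 V), IsMatchingSet G M ∧ M.card = n} := by
    refine Nat.sSup_mem ⟨0, ∅, by simp [IsMatchingSet], rfl⟩ ⟨Fintype.card (Sym2 V), ?_⟩
    rintro n ⟨M, -, rfl⟩
    exact card_le_univ M
  obtain ⟨M, hM, hn⟩ := hmem
  letI : DecidableRel G.Adj := Classical.decRel _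
  exact two_mul_card_le G _ univ M hM (fun _ _ v _ => mem_univ v) hn
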